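/- Let f ∈ ℓ^∞(ℤ) belong to K(ℤ), let X_f = X(f) be the pointwise-convergence closure of the translates of f, and let T be the shift T(x)(k) = x(k+1) on X_f. Then every T-invariant Borel probability measure ρ on X_f has discrete spectrum. -/

import Mathlib

/-!
Almost every orbit is uniformly close to one of countably many orbits, hence, off a set of small
measure, to one of finitely many. So the Koopman orbit of a bounded uniformly continuous function
is totally bounded in `L²`, and by density so is every Koopman orbit. Suppose `v ≠ 0` is orthogonal
to all eigenvectors of the Koopman isometry `U`. The Cesàro averages of the rank-one operators
`⟪Uⁿ v, ·⟫ Uⁿ v` accumulate at an operator `K` that is compact, self-adjoint, nonzero and commutes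
with `U`. A nonzero eigenspace of `K` is finite-dimensional and `U`-invariant, so it contains an
eigenvector `e` of `U`; but `e` is orthogonal to every `Uⁿ v`, so `K e = 0`, a contradiction.
-/

open MeasureTheory Filter

/-- A `T`-invariant measure `ρ` has discrete spectrum: `L²` of `ρ` is spanned by the
eigenfunctions of the Koopman operator `g ↦ g ∘ T`. -/
def HasDiscreteSpectrum {X : Type*} [MeasurableSpace X] (T : X → X) (ρ : Measure X) : Prop :=
  (Submodule.span ℂ {g : Lp ℂ 2 ρ | g ≠ 0 ∧ ∃ c : ℂ,
      (fun x => (g : X → ℂ) (T x)) =ᵐ[ρ] fun x => c * (g : X → ℂ) x}).topologicalClosure = ⊤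

open scoped Topology ENNReal Uniformity

section AlmostPeriodic

lemma totallyBounded_range_iff {ι α : Type*} [PseudoMetricSpace α] {f : ι → α} :
    TotallyBounded (Set.range f) ↔
      ∀ ε > 0, ∃ s : Finset ι, ∀ i, ∃ j ∈ s, dist (f i) (f j) < ε := by
  classical
  refine ⟨fun h ε hε => ?_, fun h => Metric.totallyBounded_iff.2 fun ε hε => ?_⟩
  · obtain ⟨t, ht, htf, hcover⟩ := Metric.finite_approx_of_totallyBounded h ε hε
    rw [← Set.image_univ, ← htf.coe_toFinset] at ht
    obtain ⟨s, -, himage⟩ := Finset.subset_set_image_iff.1 ht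
    refine ⟨s, fun i => ?_⟩
    obtain ⟨y, hy, hiy⟩ := Set.mem_iUnion₂.1 (hcover ⟨i, rfl⟩)
    rw [← htf.mem_toFinset, ← himage] at hy
    obtain ⟨j, hj, rfl⟩ := Finset.mem_image.1 hy
    exact ⟨j, hj, hiy⟩
  · obtain ⟨s, hs⟩ := h ε hε
    refine ⟨f '' s, s.finite_toSet.image f, ?_⟩
    rintro _ ⟨i, rfl⟩
    obtain ⟨j, hj, hij⟩ := hs i
    exact Set.mem_biUnion (Set.mem_image_of_mem f hj) hij

/-- A point is almost periodic for a self-map `f` of a uniform space if its forward orbit is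
totally bounded; in a complete space this says that the orbit closure is compact. -/
def IsAlmostPeriodic {α : Type*} [UniformSpace α] (f : α → α) (x : α) : Prop :=
  TotallyBounded (Set.range fun n : ℕ => f^[n] x)

lemma isClosed_setOf_isAlmostPeriodic {α : Type*} [PseudoMetricSpace α] {f : α → α}
    (hf : LipschitzWith 1 f) : IsClosed {x | IsAlmostPeriodic f x} := by
  refine isClosed_of_closure_subset fun x hx => totallyBounded_range_iff.2 fun ε hε => ?_
  obtain ⟨y, hy, hxy⟩ := Metric.mem_closure_iff.1 hx (ε / 3) (by positivity)
  obtain ⟨s, hs⟩ := totallyBounded_range_iff.1 hy (ε / 3) (by positivity)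
  have hdist (n : ℕ) : dist (f^[n] x) (f^[n] y) ≤ dist x y := by
    simpa using (hf.iterate n).dist_le_mul x y
  refine ⟨s, fun i => (hs i).imp fun j ⟨hj, hij⟩ => ⟨hj, ?_⟩⟩
  calc dist (f^[i] x) (f^[j] x)
      ≤ dist (f^[i] x) (f^[i] y) + dist (f^[i] y) (f^[j] y) + dist (f^[j] y) (f^[j] x) :=
        dist_triangle4 _ _ _ _
    _ < ε := by linarith [hdist i, hij, hdist j, dist_comm (f^[j] x) (f^[j] y)]

lemma IsAlmostPeriodic.map {α β : Type*} [UniformSpace α] [CompleteSpace α] [UniformSpace β]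
    {f : α → α} {g : β → β} {φ : α → β} {x : α} (hx : IsAlmostPeriodic f x) (hφ : Continuous φ)
    (hsemi : Function.Semiconj φ f g) : IsAlmostPeriodic g (φ x) := by
  have hcompact : IsCompact (closure (Set.range fun n : ℕ => f^[n] x)) :=
    hx.closure.isCompact_of_isClosed isClosed_closure
  refine (hcompact.image hφ).totallyBounded.subset ?_
  rintro _ ⟨n, rfl⟩
  exact ⟨f^[n] x, subset_closure ⟨n, rfl⟩, hsemi.iterate_right n x⟩

theorem IsAlmostPeriodic.exists_fixedPoint_mem_closedConvexHull {E : Type*}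
    [NormedAddCommGroup E] [NormedSpace ℝ E] [CompleteSpace E] {Φ : E →L[ℝ] E} {x : E}
    (hx : IsAlmostPeriodic Φ x) :
    ∃ y ∈ closedConvexHull ℝ (Set.range fun n : ℕ => Φ^[n] x), Φ y = y := by
  let avg (N : ℕ) : E := birkhoffAverage ℝ Φ id (N + 1) x
  have havg_mem (N : ℕ) : avg N ∈ closedConvexHull ℝ (Set.range fun n : ℕ => Φ^[n] x) := by
    simp only [avg, birkhoffAverage, birkhoffSum, Finset.smul_sum]
    refine convex_closedConvexHull.sum_mem (fun _ _ => by positivity) ?_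
      fun n _ => subset_closedConvexHull ⟨n, rfl⟩
    simp [mul_inv_cancel₀ (Nat.cast_add_one_ne_zero (R := ℝ) N)]
  have havg_map (N : ℕ) : Φ (avg N) = birkhoffAverage ℝ Φ id (N + 1) (Φ x) := by
    simp only [avg, birkhoffAverage, birkhoffSum, map_smul, map_sum, id_eq,
      ← Function.iterate_succ_apply, Function.iterate_succ_apply']
  have havg_inv : Tendsto (fun N => Φ (avg N) - avg N) atTop (𝓝 0) := by
    simp only [havg_map]
    exact (tendsto_birkhoffAverage_apply_sub_birkhoffAverage ℝ hx.isBounded).comp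
      (tendsto_add_atTop_nat 1)
  have hcompact : IsCompact (closedConvexHull ℝ (Set.range fun n : ℕ => Φ^[n] x)) := by
    rw [closedConvexHull_eq_closure_convexHull]
    exact hx.convexHull.closure.isCompact_of_isClosed isClosed_closure
  obtain ⟨y, hy, φ, hφ, hlim⟩ := hcompact.tendsto_subseq havg_mem
  exact ⟨y, hy, sub_eq_zero.1 <| tendsto_nhds_unique
    (((Φ.continuous.tendsto y).comp hlim).sub hlim) (havg_inv.comp hφ.tendsto_atTop)⟩

end AlmostPeriodic

section Operators

variable {𝕜 E F : Type*} [NontriviallyNormedField 𝕜] [NormedAddCommGroup E] [NormedSpace 𝕜 E]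
  [NormedAddCommGroup F] [NormedSpace 𝕜 F] [NormedSpace ℝ F] [SMulCommClass 𝕜 ℝ F]

lemma apply_eq_zero_of_mem_closedConvexHull {S : Set (E →L[𝕜] F)} {K : E →L[𝕜] F} {e : E}
    (hS : ∀ A ∈ S, A e = 0) (hK : K ∈ closedConvexHull ℝ S) : K e = 0 :=
  closedConvexHull_min (t := {A : E →L[𝕜] F | A e = 0}) hS
    (fun A (hA : A e = 0) B (hB : B e = 0) a b _ _ _ => by simp [hA, hB])
    (isClosed_eq (ContinuousLinearMap.apply 𝕜 F e).continuous continuous_const) hK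

lemma isCompactOperator_of_mem_closedConvexHull [CompleteSpace F] {S : Set (E →L[𝕜] F)}
    {K : E →L[𝕜] F} (hS : ∀ A ∈ S, IsCompactOperator A) (hK : K ∈ closedConvexHull ℝ S) :
    IsCompactOperator K :=
  closedConvexHull_min (t := {A : E →L[𝕜] F | IsCompactOperator A}) hS
    (fun _ hA _ hB a b _ _ _ => IsCompactOperator.add (hA.smul a) (hB.smul b))
    isClosed_setOfPred_isCompactOperator hK

end Operators

section RankOne

open InnerProductSpace

variable {𝕜 H : Type*} [RCLike 𝕜] [NormedAddCommGroup H] [InnerProductSpace 𝕜 H]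

lemma half_sq_le_norm_inner {r : ℝ} (hr : 0 ≤ r) {x y : H} (hx : r ≤ ‖x‖) (hy : r ≤ ‖y‖)
    (hxy : ‖x - y‖ ≤ r) : r ^ 2 / 2 ≤ ‖inner 𝕜 x y‖ := by
  have hsq := norm_sub_sq (𝕜 := 𝕜) x y
  have hre := RCLike.re_le_norm (inner 𝕜 x y)
  nlinarith [norm_nonneg (x - y), hr, hx, hy, hxy, hsq, hre]

lemma isCompactOperator_rankOne (x y : H) : IsCompactOperator (rankOne 𝕜 x y) :=
  (isCompactOperator_of_locallyCompactSpace_rng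
    (ContinuousLinearMap.toSpanSingleton 𝕜 x)).comp_clm (innerSL 𝕜 y)

lemma continuous_rankOne_self : Continuous fun x : H => rankOne 𝕜 x x :=
  (ContinuousLinearMap.toSpanSingletonLIE 𝕜 H).continuous.clm_comp (innerSL 𝕜).continuous

lemma inner_iterate_eigenvector_eq_zero {U : H →ₗᵢ[𝕜] H} {v e : H} {c : 𝕜}
    (he : Module.End.HasEigenvector U.toLinearMap c e) (hv : inner 𝕜 v e = 0) (n : ℕ) :
    inner 𝕜 (U^[n] v) e = 0 := by
  have hUe : U e = c • e := he.apply_eq_smul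
  have hc : c ≠ 0 := by
    rintro rfl
    exact he.2 (U.injective (by rw [hUe, zero_smul, map_zero]))
  induction n with
  | zero => exact hv
  | succ n ih =>
    have hmul : c * inner 𝕜 (U^[n + 1] v) e = 0 := by
      rw [← inner_smul_right, ← hUe, Function.iterate_succ_apply', U.inner_map_map, ih]
    exact (mul_eq_zero.1 hmul).resolve_left hc

variable [CompleteSpace H]

/-- Conjugation `A ↦ U A U†` of operators on a Hilbert space. -/
noncomputable def conjAdjoint (U : H →L[𝕜] H) : (H →L[𝕜] H) →L[𝕜] (H →L[𝕜] H) :=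
  ContinuousLinearMap.compL 𝕜 H H H U ∘L
    (ContinuousLinearMap.compL 𝕜 H H H).flip (ContinuousLinearMap.adjoint U)

lemma conjAdjoint_apply (U A : H →L[𝕜] H) :
    conjAdjoint U A = U ∘L A ∘L ContinuousLinearMap.adjoint U := rfl

lemma conjAdjoint_rankOne (U : H →L[𝕜] H) (x y : H) :
    conjAdjoint U (rankOne 𝕜 x y) = rankOne 𝕜 (U x) (U y) := by
  rw [conjAdjoint_apply, rankOne_comp, ContinuousLinearMap.adjoint_adjoint, comp_rankOne]

lemma commute_of_conjAdjoint_eq {U : H →ₗᵢ[𝕜] H} {K : H →L[𝕜] H}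
    (hK : conjAdjoint U.toContinuousLinearMap K = K) :
    Commute K U.toContinuousLinearMap := by
  have hU : ContinuousLinearMap.adjoint U.toContinuousLinearMap ∘L U.toContinuousLinearMap = 1 :=
    (ContinuousLinearMap.norm_map_iff_adjoint_comp_self _).1 U.norm_map
  calc K * U.toContinuousLinearMap
      = conjAdjoint U.toContinuousLinearMap K * U.toContinuousLinearMap := by rw [hK]
    _ = U.toContinuousLinearMap * K *
        (ContinuousLinearMap.adjoint U.toContinuousLinearMap ∘L U.toContinuousLinearMap) := rfl
    _ = U.toContinuousLinearMap * K := by rw [hU, mul_one]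

end RankOne

section ComplexHilbertSpace

open InnerProductSpace

variable {H : Type*} [NormedAddCommGroup H] [InnerProductSpace ℂ H]

lemma zero_notMem_closedConvexHull_rankOne {ι : Type*} {w : ι → H}
    (hw : TotallyBounded (Set.range w)) {r : ℝ} (hr : 0 < r) (hnorm : ∀ i, r ≤ ‖w i‖) :
    0 ∉ closedConvexHull ℝ (Set.range fun i => rankOne ℂ (w i) (w i)) := by
  obtain ⟨s, hs⟩ := totallyBounded_range_iff.1 hw r hr
  -- `total A = ∑ j ∈ s, Re ⟪w j, A (w j)⟫` separates `0` from the hull.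
  let compression (j : ι) : (H →L[ℂ] H) →L[ℝ] ℝ :=
    Complex.reCLM ∘L (innerSL ℂ (w j)).restrictScalars ℝ ∘L
      (ContinuousLinearMap.apply ℂ H (w j)).restrictScalars ℝ
  let total : (H →L[ℂ] H) →L[ℝ] ℝ := ∑ j ∈ s, compression j
  have compression_rankOne (j i : ι) :
      compression j (rankOne ℂ (w i) (w i)) = ‖inner ℂ (w i) (w j)‖ ^ 2 := by
    suffices (inner ℂ (w i) (w j) * inner ℂ (w j) (w i)).re = ‖inner ℂ (w i) (w j)‖ ^ 2 by
      simpa [compression]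
    rw [← inner_conj_symm (w j) (w i), Complex.mul_conj, Complex.ofReal_re,
      Complex.normSq_eq_norm_sq]
  have total_rankOne (i : ι) : (r ^ 2 / 2) ^ 2 ≤ total (rankOne ℂ (w i) (w i)) := by
    obtain ⟨j, hj, hij⟩ := hs i
    have hinner := half_sq_le_norm_inner (𝕜 := ℂ) hr.le (hnorm i) (hnorm j)
      (dist_eq_norm (w i) (w j) ▸ hij.le)
    calc (r ^ 2 / 2) ^ 2 ≤ ‖inner ℂ (w i) (w j)‖ ^ 2 := by gcongr
      _ ≤ ∑ j ∈ s, ‖inner ℂ (w i) (w j)‖ ^ 2 :=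
        Finset.single_le_sum (f := fun j => ‖inner ℂ (w i) (w j)‖ ^ 2)
          (fun _ _ => by positivity) hj
      _ = total (rankOne ℂ (w i) (w i)) := by
        simp only [total, sum_apply, compression_rankOne]
  have hhull : closedConvexHull ℝ (Set.range fun i => rankOne ℂ (w i) (w i)) ⊆
      total ⁻¹' Set.Ici ((r ^ 2 / 2) ^ 2) :=
    closedConvexHull_min (Set.range_subset_iff.2 total_rankOne)
      ((convex_Ici _).linear_preimage total.toLinearMap) (isClosed_Ici.preimage total.continuous)
  intro hzero
  have hle : (r ^ 2 / 2) ^ 2 ≤ total 0 := hhull hzero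
  rw [map_zero] at hle
  exact hle.not_gt (by positivity)

variable [CompleteSpace H]

lemma exists_eigenvector_of_commute {U : H →ₗ[ℂ] H} {K : H →L[ℂ] H} (hK : IsCompactOperator K)
    (hsymm : K.IsSymmetric) (hne : K ≠ 0) (hcomm : Commute K.toLinearMap U) :
    ∃ e c, Module.End.HasEigenvector U c e ∧ K e ≠ 0 := by
  obtain ⟨μ, hμ, hμ0⟩ : ∃ μ, Module.End.HasEigenvalue K.toLinearMap μ ∧ μ ≠ 0 := by
    by_contra! h
    exact hne ((ContinuousLinearMap.eq_zero_of_forall_hasEigenvalue_eq_zero hK hsymm).1 h)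
  have := ContinuousLinearMap.finite_dimensional_eigenspace hK μ hμ0
  have : Nontrivial (Module.End.eigenspace K.toLinearMap μ) := Submodule.nontrivial_iff_ne_bot.2 hμ
  obtain ⟨c, hc⟩ := Module.End.exists_eigenvalue
    (U.restrict (Module.End.mapsTo_genEigenspace_of_comm hcomm μ 1))
  obtain ⟨e, he⟩ := hc.exists_hasEigenvector
  have he0 : (e : H) ≠ 0 := Subtype.coe_ne_coe.2 he.2
  refine ⟨e, c, ⟨Module.End.mem_eigenspace_iff.2 (congrArg Subtype.val he.apply_eq_smul), he0⟩, ?_⟩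
  have hKe : K e = μ • (e : H) := Module.End.mem_eigenspace_iff.1 e.2
  exact hKe ▸ smul_ne_zero hμ0 he0

lemma isSelfAdjoint_of_mem_closedConvexHull {S : Set (H →L[ℂ] H)} {K : H →L[ℂ] H}
    (hS : ∀ A ∈ S, IsSelfAdjoint A) (hK : K ∈ closedConvexHull ℝ S) : IsSelfAdjoint K :=
  closedConvexHull_min (t := {A : H →L[ℂ] H | IsSelfAdjoint A}) hS
    (selfAdjoint.submodule ℝ (H →L[ℂ] H)).convex (isClosed_eq continuous_star continuous_id) hK

theorem exists_isCompactOperator_commute {U : H →ₗᵢ[ℂ] H} {v : H} (hv : IsAlmostPeriodic U v)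
    (hne : v ≠ 0) :
    ∃ K : H →L[ℂ] H, IsCompactOperator K ∧ K.IsSymmetric ∧ K ≠ 0 ∧
      Commute K U.toContinuousLinearMap ∧ ∀ e, (∀ n, inner ℂ (U^[n] v) e = 0) → K e = 0 := by
  let Φ : (H →L[ℂ] H) →L[ℝ] (H →L[ℂ] H) :=
    (conjAdjoint U.toContinuousLinearMap).restrictScalars ℝ
  have hsemi : Function.Semiconj (fun x : H => rankOne ℂ x x) U Φ := fun x =>
    (conjAdjoint_rankOne U.toContinuousLinearMap x x).symm
  obtain ⟨K, hK, hfix⟩ :=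
    (hv.map continuous_rankOne_self hsemi).exists_fixedPoint_mem_closedConvexHull
  have horbit (n : ℕ) : Φ^[n] (rankOne ℂ v v) = rankOne ℂ (U^[n] v) (U^[n] v) :=
    (hsemi.iterate_right n v).symm
  have hnorm (n : ℕ) : ‖U^[n] v‖ = ‖v‖ := by rw [← U.coe_pow, LinearIsometry.norm_map]
  simp only [horbit] at hK
  refine ⟨K, isCompactOperator_of_mem_closedConvexHull ?_ hK,
    (isSelfAdjoint_of_mem_closedConvexHull ?_ hK).isSymmetric, ?_, commute_of_conjAdjoint_eq hfix,
    fun e he => apply_eq_zero_of_mem_closedConvexHull ?_ hK⟩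
  · rintro _ ⟨n, rfl⟩
    exact isCompactOperator_rankOne _ _
  · rintro _ ⟨n, rfl⟩
    exact (isPositive_rankOne_self _).isSelfAdjoint
  · rintro rfl
    exact zero_notMem_closedConvexHull_rankOne hv (norm_pos_iff.2 hne)
      (fun n => (hnorm n).ge) hK
  · rintro _ ⟨n, rfl⟩
    rw [rankOne_apply, he n, zero_smul]

theorem orthogonal_iSup_eigenspace_eq_bot {U : H →ₗᵢ[ℂ] H} (hU : ∀ v, IsAlmostPeriodic U v) :
    (⨆ c, Module.End.eigenspace U.toLinearMap c)ᗮ = ⊥ := by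
  refine (Submodule.eq_bot_iff _).2 fun v hv => by_contra fun hne => ?_
  obtain ⟨K, hK, hsymm, hK0, hcomm, hker⟩ := exists_isCompactOperator_commute (hU v) hne
  obtain ⟨e, c, he, hKe⟩ := exists_eigenvector_of_commute (U := U.toLinearMap) hK hsymm hK0
    (congrArg ContinuousLinearMap.toLinearMap hcomm)
  have hve : inner ℂ v e = 0 := Submodule.inner_left_of_mem_orthogonal
    (Submodule.mem_iSup_of_mem c he.1) hv
  exact hKe (hker e (inner_iterate_eigenvector_eq_zero he hve))

end ComplexHilbertSpace

section LpSpace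

variable {X E : Type*} [MeasurableSpace X] [NormedAddCommGroup E] {μ : Measure X}
  [IsFiniteMeasure μ] {p : ℝ≥0∞}

lemma exists_finset_measure_compl_biUnion_le {ι : Type*} [Countable ι] {B : ι → Set X}
    (hB : ∀ i, NullMeasurableSet (B i) μ) (hcover : ∀ᵐ x ∂μ, ∃ i, x ∈ B i) {ε : ℝ≥0∞}
    (hε : ε ≠ 0) : ∃ F : Finset ι, μ (⋃ i ∈ F, B i)ᶜ ≤ ε := by
  have hmeas (F : Finset ι) : NullMeasurableSet (⋃ i ∈ F, B i)ᶜ μ :=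
    (F.nullMeasurableSet_biUnion fun i _ => hB i).compl
  have hanti : Antitone fun F : Finset ι => (⋃ i ∈ F, B i)ᶜ := fun F G hFG =>
    Set.compl_subset_compl.2 (Set.biUnion_subset_biUnion_left hFG)
  have hnull : μ (⋂ F : Finset ι, (⋃ i ∈ F, B i)ᶜ) = 0 := by
    rw [← Set.compl_iUnion, ← Set.iUnion_eq_iUnion_finset]
    simpa only [ae_iff, ← Set.mem_iUnion] using! hcover
  have hlim := tendsto_measure_iInter_atTop hmeas hanti ⟨∅, measure_ne_top μ _⟩
  rw [hnull] at hlim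
  exact (hlim.eventually_le_const (pos_iff_ne_zero.2 hε)).exists

lemma exists_forall_eLpNorm_le (hp₁ : 1 ≤ p) (hp : p ≠ ∞) (M : ℝ) {ε : ℝ≥0∞} (hε : ε ≠ 0) :
    ∃ δ > (0 : ℝ), ∀ (h : X → E) (A : Set X), μ Aᶜ ≤ ENNReal.ofReal δ → (∀ᵐ x ∂μ, ‖h x‖ ≤ M) →
      (∀ᵐ x ∂μ, x ∈ A → ‖h x‖ ≤ δ) → eLpNorm h p μ ≤ ε := by
  have hε₂ : ε / 2 ≠ 0 := by simpa using hε
  obtain ⟨η, hη, hindicator⟩ := exists_eLpNorm_indicator_le (μ := μ) hp M hε₂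
  have hlim : Tendsto (fun δ => μ Set.univ ^ p.toReal⁻¹ * ENNReal.ofReal δ) (𝓝[>] 0) (𝓝 0) := by
    simpa using ENNReal.Tendsto.const_mul (a := μ Set.univ ^ p.toReal⁻¹)
      (ENNReal.tendsto_ofReal (tendsto_id.mono_left (nhdsWithin_le_nhds (a := (0 : ℝ)))))
      (.inr <| ENNReal.rpow_ne_top_of_nonneg (by positivity) (measure_ne_top μ _))
  obtain ⟨δ, ⟨hδε, hδη⟩, hδ⟩ := (((hlim.eventually_le_const (pos_iff_ne_zero.2 hε₂)).and
    (nhdsWithin_le_nhds (eventually_le_nhds (NNReal.coe_pos.2 hη)))).and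
      self_mem_nhdsWithin).exists
  refine ⟨δ, hδ, fun h A hA hM hhδ => ?_⟩
  let B := toMeasurable μ Aᶜ
  have hB : μ B ≤ η := by
    rw [measure_toMeasurable]
    exact hA.trans (ENNReal.ofReal_le_of_le_toReal hδη)
  have hpointwise : ∀ᵐ x ∂μ, ‖h x‖ ≤ δ + B.indicator (fun _ => M) x := by
    filter_upwards [hM, hhδ] with x hxM hxδ
    by_cases hx : x ∈ B
    · rw [Set.indicator_of_mem hx]
      exact hxM.trans (le_add_of_nonneg_left hδ.le)
    · rw [Set.indicator_of_notMem hx, add_zero]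
      exact hxδ (not_not.1 fun hxA => hx (subset_toMeasurable μ Aᶜ hxA))
  calc eLpNorm h p μ ≤ eLpNorm ((fun _ => δ) + B.indicator fun _ => M) p μ :=
        eLpNorm_mono_ae_real hpointwise
    _ ≤ eLpNorm (fun _ => δ) p μ + eLpNorm (B.indicator fun _ => M) p μ :=
        eLpNorm_add_le aestronglyMeasurable_const
          (aestronglyMeasurable_const.indicator (measurableSet_toMeasurable μ _)) hp₁
    _ ≤ ε / 2 + ε / 2 := by
        refine add_le_add ((eLpNorm_le_of_ae_bound ?_).trans hδε) (hindicator B hB)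
        exact ae_of_all μ fun _ => (Real.norm_of_nonneg hδ.le).le
    _ = ε := ENNReal.add_halves ε

theorem totallyBounded_range_Lp [ProperSpace E] [Fact (1 ≤ p)] (hp : p ≠ ∞) {ι : Type*}
    [Countable ι] {G : ι → Lp E p μ} {g : ι → X → E} {M : ℝ} (hG : ∀ i, G i =ᵐ[μ] g i)
    (hM : ∀ i x, ‖g i x‖ ≤ M)
    (hsep : ∀ ε > 0, ∃ D : Set X, D.Countable ∧
      ∀ᵐ x ∂μ, ∃ y ∈ D, ∀ i, dist (g i x) (g i y) ≤ ε) :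
    TotallyBounded (Set.range G) := by
  refine totallyBounded_range_iff.2 fun ε hε => ?_
  obtain ⟨δ, hδ, hnorm⟩ := exists_forall_eLpNorm_le (E := E) (μ := μ) Fact.out hp (M + M)
    (ENNReal.ofReal_pos.2 (half_pos hε)).ne'
  obtain ⟨D, hD, hcover⟩ := hsep (δ / 3) (by positivity)
  have := hD.to_subtype
  let B (y : D) : Set X := {x | ∀ i, dist (g i x) (g i y) ≤ δ / 3}
  have hB (y : D) : NullMeasurableSet (B y) μ := by
    simp only [B, Set.ofPred_forall]
    exact .iInter fun i => nullMeasurableSet_le ((((Lp.aestronglyMeasurable (G i)).congr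
      (hG i)).dist aestronglyMeasurable_const).aemeasurable) aemeasurable_const
  obtain ⟨F, hF⟩ := exists_finset_measure_compl_biUnion_le hB
    (hcover.mono fun x ⟨y, hy, hxy⟩ => ⟨⟨y, hy⟩, hxy⟩) (ENNReal.ofReal_pos.2 hδ).ne'
  let V (i : ι) (y : F) : E := g i y
  have hV : Bornology.IsBounded (Set.range V) := isBounded_iff_forall_norm_le.2
    ⟨max M 0, Set.forall_mem_range.2 fun i => (pi_norm_le_iff_of_nonneg (le_max_right M 0)).2
      fun y => (hM i y).trans (le_max_left M 0)⟩
  obtain ⟨s, hs⟩ := totallyBounded_range_iff.1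
    (hV.isCompact_closure.totallyBounded.subset subset_closure) (δ / 3) (by positivity)
  refine ⟨s, fun i => (hs i).imp fun j ⟨hj, hij⟩ => ⟨hj, ?_⟩⟩
  rw [← edist_lt_ofReal, Lp.edist_def]
  refine (hnorm _ (⋃ y ∈ F, B y) hF ?_ ?_).trans_lt
    ((ENNReal.ofReal_lt_ofReal_iff hε).2 (half_lt_self hε))
  · filter_upwards [hG i, hG j] with x hi hj
    rw [Pi.sub_apply, hi, hj]
    exact (norm_sub_le _ _).trans (add_le_add (hM i x) (hM j x))
  · filter_upwards [hG i, hG j] with x hi hj hx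
    obtain ⟨y, hy, hxy⟩ := Set.mem_iUnion₂.1 hx
    have hyij : dist (g i y) (g j y) < δ / 3 := (dist_pi_lt_iff (by positivity)).1 hij ⟨y, hy⟩
    rw [Pi.sub_apply, hi, hj, ← dist_eq_norm]
    linarith [dist_triangle4 (g i x) (g i y) (g j y) (g j x), hxy i, hxy j, hyij,
      dist_comm (g j x) (g j y)]

end LpSpace

section Density

variable {X E : Type*} [MeasurableSpace X] [NormedAddCommGroup E] {μ : Measure X}
  [IsFiniteMeasure μ] {p : ℝ≥0∞}

lemma exists_measure_thickening_diff_le [PseudoEMetricSpace X] [OpensMeasurableSpace X]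
    {F : Set X} (hF : IsClosed F) {ε : ℝ≥0∞} (hε : ε ≠ 0) :
    ∃ δ > 0, μ (Metric.thickening δ F \ F) ≤ ε := by
  have hlim := tendsto_measure_thickening_of_isClosed (μ := μ) ⟨1, one_pos, measure_ne_top μ _⟩ hF
  obtain ⟨δ, hle, hδ⟩ := ((hlim.eventually_le_const
    (ENNReal.lt_add_right (measure_ne_top μ F) hε)).and self_mem_nhdsWithin).exists
  refine ⟨δ, hδ, ?_⟩
  rw [measure_sdiff (Metric.self_subset_thickening hδ F) hF.nullMeasurableSet (measure_ne_top μ F)]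
  exact tsub_le_iff_left.2 hle

variable [NormedSpace ℝ E]

lemma exists_uniformContinuous_eLpNorm_sub_indicator_le [PseudoEMetricSpace X] [BorelSpace X]
    (hp₁ : 1 ≤ p) (hp : p ≠ ∞) (c : E) {s : Set X} (hs : MeasurableSet s) {ε : ℝ≥0∞} (hε : ε ≠ 0) :
    ∃ g : X → E, eLpNorm (g - s.indicator fun _ => c) p μ ≤ ε ∧
      UniformContinuous g ∧ ∃ M, ∀ x, ‖g x‖ ≤ M := by
  obtain ⟨δ, hδ, hnorm⟩ := exists_forall_eLpNorm_le (E := E) (μ := μ) hp₁ hp (‖c‖ + ‖c‖) hε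
  have hδ₂ : ENNReal.ofReal δ / 2 ≠ 0 := by simpa using hδ
  obtain ⟨F, hFs, hF, hsF⟩ := hs.exists_isClosed_sdiff_lt (measure_ne_top μ s) hδ₂
  obtain ⟨r, hr, hrF⟩ := exists_measure_thickening_diff_le (μ := μ) hF hδ₂
  let φ : X → ℝ := fun x => thickenedIndicator hr F x
  have hφ (x : X) : ‖φ x • c‖ ≤ ‖c‖ := by
    rw [norm_smul, Real.norm_of_nonneg (NNReal.coe_nonneg _)]
    exact mul_le_of_le_one_left (norm_nonneg c) (thickenedIndicator_le_one hr F x)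
  have hφ_uniform : UniformContinuous φ :=
    NNReal.isometry_coe.uniformContinuous.comp
      (lipschitzWith_thickenedIndicator hr F).uniformContinuous
  refine ⟨fun x => φ x • c, hnorm _ (F ∪ (Metric.thickening r F ∪ s)ᶜ) ?_ ?_ ?_,
    (ContinuousLinearMap.toSpanSingleton ℝ c).uniformContinuous.comp hφ_uniform, ‖c‖, hφ⟩
  · calc μ (F ∪ (Metric.thickening r F ∪ s)ᶜ)ᶜ
        = μ (Metric.thickening r F \ F ∪ s \ F) := by
          rw [Set.compl_union, compl_compl, ← Set.union_sdiff_distrib, Set.inter_comm,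
            Set.sdiff_eq]
      _ ≤ ENNReal.ofReal δ / 2 + ENNReal.ofReal δ / 2 :=
          (measure_union_le _ _).trans (add_le_add hrF hsF.le)
      _ = ENNReal.ofReal δ := ENNReal.add_halves _
  · exact ae_of_all μ fun x => (norm_sub_le _ _).trans (add_le_add (hφ x)
      (norm_indicator_le_norm_self _ x))
  · refine ae_of_all μ fun x hx => ?_
    suffices φ x • c = s.indicator (fun _ => c) x by
      simpa [Pi.sub_apply, this] using hδ.le
    rcases hx with hx | hx
    · have hφx : φ x = 1 := congrArg NNReal.toReal (thickenedIndicator_one hr F hx)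
      rw [hφx, one_smul, Set.indicator_of_mem (hFs hx)]
    · obtain ⟨hxF, hxs⟩ := not_or.1 hx
      have hφx : φ x = 0 := congrArg NNReal.toReal (thickenedIndicator_zero hr F hxF)
      rw [hφx, zero_smul, Set.indicator_of_notMem hxs]

theorem exists_uniformContinuous_eLpNorm_sub_le [UniformSpace X] [(𝓤 X).IsCountablyGenerated]
    [BorelSpace X] [SecondCountableTopologyEither X E] (hp₁ : 1 ≤ p) (hp : p ≠ ∞) {f : X → E}
    (hf : MemLp f p μ) {ε : ℝ≥0∞} (hε : ε ≠ 0) :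
    ∃ g : X → E, eLpNorm (f - g) p μ ≤ ε ∧ UniformContinuous g ∧ ∃ M, ∀ x, ‖g x‖ ≤ M := by
  let _ := UniformSpace.pseudoMetricSpace X
  refine MemLp.induction_dense hp (fun g => UniformContinuous g ∧ ∃ M, ∀ x, ‖g x‖ ≤ M)
    (fun c s hs _ ε hε => exists_uniformContinuous_eLpNorm_sub_indicator_le hp₁ hp c hs hε)
    ?_ (fun g hg => hg.1.continuous.aestronglyMeasurable) hf hε
  rintro g₁ g₂ ⟨hg₁, M₁, hM₁⟩ ⟨hg₂, M₂, hM₂⟩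
  exact ⟨hg₁.add hg₂, M₁ + M₂, fun x => (norm_add_le _ _).trans (add_le_add (hM₁ x) (hM₂ x))⟩

end Density

section Koopman

/-- Up to a `ρ`-null set, countably many orbits of `T` approximate every forward orbit uniformly in
time, for the uniform structure of `X`. -/
def OrbitSeparable {X : Type*} [UniformSpace X] [MeasurableSpace X] (T : X → X) (ρ : Measure X) :
    Prop :=
  ∀ V ∈ 𝓤 X, ∃ D : Set X, D.Countable ∧ ∀ᵐ x ∂ρ, ∃ y ∈ D, ∀ n : ℕ, (T^[n] x, T^[n] y) ∈ V

variable {X E : Type*} [UniformSpace X] [MeasurableSpace X] {T : X → X}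
  {ρ : Measure X} [IsFiniteMeasure ρ] [NormedAddCommGroup E] {p : ℝ≥0∞} [Fact (1 ≤ p)]

lemma OrbitSeparable.isAlmostPeriodic_toLp [ProperSpace E] (hsep : OrbitSeparable T ρ)
    (hT : MeasurePreserving T ρ ρ) (hp : p ≠ ∞) {g : X → E} (hgp : MemLp g p ρ)
    (hg : UniformContinuous g) {M : ℝ} (hM : ∀ x, ‖g x‖ ≤ M) :
    IsAlmostPeriodic (Lp.compMeasurePreserving T hT) (hgp.toLp g) := by
  refine totallyBounded_range_Lp (g := fun n x => g (T^[n] x)) hp (fun n => ?_)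
    (fun n x => hM _) fun ε hε => ?_
  · rw [Lp.compMeasurePreserving_iterate, Lp.toLp_compMeasurePreserving]
    exact MemLp.coeFn_toLp _
  · obtain ⟨D, hD, hae⟩ := hsep _ (hg (Metric.dist_mem_uniformity hε))
    exact ⟨D, hD, hae.mono fun x ⟨y, hy, hxy⟩ => ⟨y, hy, fun n => (hxy n).le⟩⟩

variable [(𝓤 X).IsCountablyGenerated] [BorelSpace X]

theorem OrbitSeparable.isAlmostPeriodic [NormedSpace ℝ E] [ProperSpace E]
    (hsep : OrbitSeparable T ρ) (hT : MeasurePreserving T ρ ρ) (hp : p ≠ ∞) (v : Lp E p ρ) :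
    IsAlmostPeriodic (Lp.compMeasurePreserving T hT) v := by
  have hclosed := isClosed_setOf_isAlmostPeriodic (Lp.isometry_compMeasurePreserving (E := E)
    (p := p) hT).lipschitz
  refine hclosed.closure_subset (EMetric.mem_closure_iff.2 fun ε hε => ?_)
  obtain ⟨η, hη, hηε⟩ := exists_between hε
  obtain ⟨g, hvg, hg, M, hM⟩ :=
    exists_uniformContinuous_eLpNorm_sub_le Fact.out hp (Lp.memLp v) hη.ne'
  let _ := UniformSpace.pseudoMetricSpace X
  have hgp : MemLp g p ρ :=
    .of_bound hg.continuous.aestronglyMeasurable M (ae_of_all ρ hM)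
  refine ⟨hgp.toLp g, hsep.isAlmostPeriodic_toLp hT hp hgp hg hM, ?_⟩
  rw [← Lp.toLp_coeFn v (Lp.memLp v), Lp.edist_toLp_toLp]
  exact hvg.trans_lt hηε

theorem OrbitSeparable.hasDiscreteSpectrum (hsep : OrbitSeparable T ρ)
    (hT : MeasurePreserving T ρ ρ) : HasDiscreteSpectrum T ρ := by
  let U := Lp.compMeasurePreservingₗᵢ (E := ℂ) (p := 2) ℂ T hT
  have hdense : (⨆ c, Module.End.eigenspace U.toLinearMap c).topologicalClosure = ⊤ :=
    Submodule.topologicalClosure_eq_top_iff.2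
      (orthogonal_iSup_eigenspace_eq_bot (hsep.isAlmostPeriodic hT ENNReal.ofNat_ne_top))
  refine top_unique (hdense ▸ Submodule.topologicalClosure_mono (iSup_le fun c g hg => ?_))
  rcases eq_or_ne g 0 with rfl | hg0
  · exact zero_mem _
  have hUg : Lp.compMeasurePreserving T hT g = c • g := Module.End.mem_eigenspace_iff.1 hg
  refine Submodule.subset_span ⟨hg0, c, (Lp.coeFn_compMeasurePreserving g hT).symm.trans ?_⟩
  exact hUg ▸ Lp.coeFn_smul c g

end Koopman

lemma orbitSeparable_of_forall_apply_eq {ι E : Type*} [PseudoMetricSpace E] [MeasurableSpace E]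
    {σ : ι → ι} {T : (ι → E) → (ι → E)} (hT : ∀ x k, T x k = x (σ k)) {ρ : Measure (ι → E)}
    (hsep : ∀ ε > 0, ∃ D : Set (ι → E), D.Countable ∧
      ∀ᵐ x ∂ρ, ∃ y ∈ D, ∀ k, dist (x k) (y k) < ε) :
    OrbitSeparable T ρ := by
  have hiter (n : ℕ) (x : ι → E) (k : ι) : T^[n] x k = x (σ^[n] k) := by
    induction n generalizing k with
    | zero => rfl
    | succ n ih => rw [Function.iterate_succ_apply', hT, ih, Function.iterate_succ_apply]
  intro V hV
  -- Uniform convergence on `ι` is finer than pointwise convergence.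
  obtain ⟨ε, hε, hεV⟩ : ∃ ε > 0, ∀ x y : ι → E, (∀ k, dist (x k) (y k) < ε) → (x, y) ∈ V := by
    obtain ⟨ε, hε, h⟩ :=
      ((UniformFun.hasBasis_uniformity_of_basis ι E Metric.uniformity_basis_dist).mem_iff).1
        (UniformFun.uniformContinuous_toFun hV)
    exact ⟨ε, hε, fun x y hxy => @h (UniformFun.ofFun x, UniformFun.ofFun y) hxy⟩
  obtain ⟨D, hD, hae⟩ := hsep ε hε
  refine ⟨D, hD, hae.mono fun x ⟨y, hy, hxy⟩ => ⟨y, hy, fun n => hεV _ _ fun k => ?_⟩⟩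
  simpa only [hiter] using hxy (σ^[n] k)

theorem discrete_spectrum_of_Veech_class_general {ι E : Type*} [Countable ι] [PseudoMetricSpace E]
    [SecondCountableTopology E] [MeasurableSpace E] [BorelSpace E] {σ : ι → ι}
    {T : (ι → E) → (ι → E)} (hT : ∀ x k, T x k = x (σ k)) {ρ : Measure (ι → E)}
    [IsFiniteMeasure ρ] (hρinv : MeasurePreserving T ρ ρ)
    (hsep : ∀ ε > 0, ∃ D : Set (ι → E), D.Countable ∧
      ∀ᵐ x ∂ρ, ∃ y ∈ D, ∀ k, dist (x k) (y k) < ε) :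
    HasDiscreteSpectrum T ρ :=
  (orbitSeparable_of_forall_apply_eq hT hsep).hasDiscreteSpectrum hρinv

/-- For `f` in Veech's class `K(ℤ)`, every shift-invariant Borel probability measure on
`X_f` (the pointwise-convergence closure of the translates of `f`) has discrete spectrum. -/
theorem discrete_spectrum_of_Veech_class
    (f : ℤ → ℂ) (hbd : ∃ C : ℝ, ∀ k : ℤ, ‖f k‖ ≤ C)
    -- `X(f)`: the closure of the translates of `f` in the product (pointwise) topology
    (Xf : Set (ℤ → ℂ))
    (hXf : Xf = closure (Set.range fun n : ℤ => fun k : ℤ => f (k + n)))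
    -- `f ∈ K(ℤ)`: `X(f)` is separable in the `ℓ^∞` norm topology
    (hsep : ∃ D : Set (ℤ → ℂ), D.Countable ∧ D ⊆ Xf ∧
      ∀ x ∈ Xf, ∀ ε > (0 : ℝ), ∃ y ∈ D, ∀ k : ℤ, ‖x k - y k‖ < ε)
    -- the shift `T(x)(k) = x(k+1)`
    (T : (ℤ → ℂ) → (ℤ → ℂ)) (hTshift : ∀ x k, T x k = x (k + 1))
    -- a shift-invariant Borel probability measure carried by `X_f`
    (ρ : Measure (ℤ → ℂ)) (hρprob : IsProbabilityMeasure ρ)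
    (hρXf : ρ Xf = 1) (hρinv : MeasurePreserving T ρ ρ) :
    HasDiscreteSpectrum T ρ := by
  obtain ⟨D, hD, -, hsep⟩ := hsep
  have hae : ∀ᵐ x ∂ρ, x ∈ Xf :=
    (mem_ae_iff_prob_eq_one (hXf ▸ isClosed_closure).measurableSet).2 hρXf
  exact discrete_spectrum_of_Veech_class_general hTshift hρinv fun ε hε =>
    ⟨D, hD, hae.mono fun x hx => by simpa only [dist_eq_norm] using hsep x hx ε hε⟩
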